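/- Let p be an odd prime, let n be a positive integer, and let G be a group of order 2^n · p generated by elements ρ0, ρ1, ρ2 with ρ0^2 = ρ1^2 = ρ2^2 = (ρ0ρ2)^2 = 1. Let k1 be the order of the element ρ0ρ1 and k2 the order of the element ρ1ρ2. Then there exist non-negative integers s and t such that either (k1 = 2^s · p and k2 = 2^t), or (k1 = 2^s and k2 = 2^t · p), or (k1 = 2^s · p and k2 = 2^t · p). -/

import Mathlib

/-!
Let `|G| = q ^ n * p` with `p ≠ q` prime, and let `S`, `T` be distinct Sylow `q`-subgroups whose
intersection `D` is as large as possible. The normalizer `N` of `D` is not a `q`-group, so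
`G = S * N`, and `D` lies in the core `K` of `S`. Hence `|S : K| ≤ |S : S ∩ T| ≤ p`, where
`|S : K| ≠ p` since `|S : K|` is a power of `q`, and by Sylow's theorem `G / K` has a normal
subgroup `P` of order `p`.

Let `q = 2`, and let `G` be generated by involutions whose pairwise products are `2`-elements. In
`G / K` each of them centralizes or inverts `P`. The `2`-elements centralizing `P` lie in every
Sylow `2`-subgroup, and so does the product of two inverting generators. Thus a Sylow `2`-subgroup
of `G / K` containing one inverting generator contains them all, so `G` is a `2`-group, although `p`
is odd.
-/

open Subgroup
open scoped Pointwise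

lemma exists_eq_pow_or_eq_pow_mul_of_dvd {p q n k : ℕ} (hp : p.Prime) (hq : q.Prime)
    (hk : k ∣ q ^ n * p) : ∃ s, k = q ^ s ∨ k = q ^ s * p := by
  obtain ⟨a, b, ha, hb, rfl⟩ := Nat.dvd_mul.1 hk
  obtain ⟨s, -, rfl⟩ := (Nat.dvd_prime_pow hq).1 ha
  refine ⟨s, ?_⟩
  rcases (Nat.dvd_prime hp).1 hb with rfl | rfl
  exacts [.inl (mul_one _), .inr rfl]

section

variable {G : Type*} [Group G]

lemma le_normalCore_of_isComplement'_of_le_normalizer {D H K : Subgroup G} (hD : D ≤ H)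
    (hHK : H.IsComplement' K) (hK : K ≤ normalizer (D : Set G)) : D ≤ H.normalCore := by
  intro d hd g
  obtain ⟨⟨s, y⟩, rfl⟩ := hHK.2 g
  have hyd : (y : G) * d * (y : G)⁻¹ ∈ H := hD ((mem_normalizer_iff.1 (hK y.2) d).1 hd)
  simpa only [mul_assoc, mul_inv_rev] using mul_mem (mul_mem s.2 hyd) (inv_mem s.2)

lemma mem_centralizer_or_conj_eq_inv_of_card_prime {P : Subgroup G} [P.Normal]
    (hP : (Nat.card P).Prime) {a : G} (ha : a ^ 2 = 1) :
    a ∈ centralizer (P : Set G) ∨ ∀ x ∈ P, a * x * a⁻¹ = x⁻¹ := by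
  have := Fact.mk hP
  have : IsCyclic P := isCyclic_of_prime_card rfl
  rcases ((centralizer {a}).subgroupOf P).eq_bot_or_eq_top_of_prime_card with hbot | htop
  · right
    intro x hx
    have hax : a * x * a⁻¹ ∈ P := Normal.conj_mem inferInstance x hx a
    have ha_inv : a⁻¹ = a := inv_eq_of_mul_eq_one_left (sq a ▸ ha)
    have hcomm : x * (a * x * a⁻¹) = a * x * a⁻¹ * x := setLike_mul_comm hx hax
    have hfixed : x * (a * x * a⁻¹) ∈ centralizer {a} := by
      refine mem_centralizer_singleton_iff.2 ?_
      calc x * (a * x * a⁻¹) * a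
        _ = x * a * x := by group
        _ = a * (a * x * a⁻¹) * x := by simp only [ha_inv, ← mul_assoc, ← sq, ha, one_mul]
        _ = a * (x * (a * x * a⁻¹)) := by rw [hcomm, mul_assoc]
    exact eq_inv_of_mul_eq_one_right
      (disjoint_def.1 (subgroupOf_eq_bot.1 hbot) hfixed (mul_mem hx hax))
  · left
    rw [subgroupOf_eq_top] at htop
    exact fun x hx => mem_centralizer_singleton_iff.1 (htop hx)

lemma mul_mem_centralizer_of_conj_eq_inv {P : Subgroup G} {a b : G}
    (ha : ∀ x ∈ P, a * x * a⁻¹ = x⁻¹) (hb : ∀ x ∈ P, b * x * b⁻¹ = x⁻¹) :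
    a * b ∈ centralizer (P : Set G) := by
  intro x hx
  have habx : a * b * x * (a * b)⁻¹ = x := calc
    _ = a * (b * x * b⁻¹) * a⁻¹ := by group
    _ = x := by rw [hb x hx, ha _ (inv_mem hx), inv_inv]
  exact (mul_inv_eq_iff_eq_mul.1 habx).symm

lemma isPGroup_zpowers_of_orderOf_dvd {q k : ℕ} {g : G} (hg : orderOf g ∣ q ^ k) :
    IsPGroup q (zpowers g) :=
  IsPGroup.of_card_dvd_pow ((Nat.card_zpowers g).symm ▸ hg)

lemma isPGroup_zpowers_mul_comm {q : ℕ} {a b : G} (h : IsPGroup q (zpowers (a * b))) :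
    IsPGroup q (zpowers (b * a)) := by
  have hconj : (zpowers (a * b)).map (MulAut.conj b).toMonoidHom = zpowers (b * a) := by
    rw [MonoidHom.map_zpowers]
    simp [mul_assoc]
  exact hconj ▸ h.map _

variable [Finite G]

lemma exists_normal_card_eq_of_card_eq_mul {p m : ℕ} [Fact p.Prime] (hm : m < p)
    (hcard : Nat.card G = m * p) : ∃ P : Subgroup G, P.Normal ∧ Nat.card P = p := by
  have hp : p.Prime := Fact.out
  have hm0 : m ≠ 0 := by
    rintro rfl
    exact Nat.card_pos.ne' (hcard.trans (zero_mul p))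
  let P : Sylow p G := default
  have hP : Nat.card (P : Subgroup G) = p := by
    have hfact : (m * p).factorization p = 1 := by
      rw [Nat.factorization_mul hm0 hp.ne_zero, Finsupp.add_apply, hp.factorization_self,
        Nat.factorization_eq_zero_of_lt hm, zero_add]
    rw [P.card_eq_multiplicity, hcard, hfact, pow_one]
  have hindex : (P : Subgroup G).index = m := by
    refine Nat.eq_of_mul_eq_mul_right hp.pos ?_
    rw [← hcard, ← (P : Subgroup G).index_mul_card, hP]
  have hsylow : Nat.card (Sylow p G) < p :=
    (Nat.le_of_dvd (Nat.pos_of_ne_zero hm0) (hindex ▸ P.card_dvd_index)).trans_lt hm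
  have hone : Nat.card (Sylow p G) = 1 :=
    (card_sylow_modEq_one p G).eq_of_lt_of_lt hsylow hp.one_lt
  have := (Nat.card_eq_one_iff_unique.1 hone).1
  exact ⟨P, P.normal_of_subsingleton, hP⟩

section Sylow

variable {q : ℕ} [Fact q.Prime]

lemma exists_mem_normalizer_notMem_of_lt_isPGroup {S D : Subgroup G} (hS : IsPGroup q S)
    (hD : D < S) : ∃ x ∈ S, x ∈ normalizer (D : Set G) ∧ x ∉ D := by
  have := hS.isNilpotent
  have hproper : D.subgroupOf S < ⊤ := by
    rw [lt_top_iff_ne_top, Ne, subgroupOf_eq_top]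
    exact hD.not_ge
  have hgrows := Group.normalizerCondition_of_isNilpotent _ hproper
  rw [← subgroupOf_normalizer_eq hD.le] at hgrows
  obtain ⟨x, hxN, hxD⟩ := SetLike.exists_of_lt hgrows
  exact ⟨x, x.2, mem_subgroupOf.1 hxN, fun h => hxD (mem_subgroupOf.2 h)⟩

lemma not_isPGroup_normalizer_inf_of_maximal {S T : Sylow q G} (hST : S ≠ T)
    (hmax : ∀ U V : Sylow q G, U ≠ V → ¬ (S ⊓ T : Subgroup G) < (U ⊓ V : Subgroup G)) :
    ¬ IsPGroup q (normalizer ((S ⊓ T : Subgroup G) : Set G)) := by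
  intro hN
  obtain ⟨U, hU⟩ := hN.exists_le_sylow
  have eq_U {R : Sylow q G} (hR : (S ⊓ T : Subgroup G) < R) : R = U := by
    by_contra hRU
    obtain ⟨x, hxR, hxN, hxD⟩ := exists_mem_normalizer_notMem_of_lt_isPGroup R.2 hR
    refine hmax R U hRU (lt_of_le_of_ne (le_inf hR.le (le_normalizer.trans hU)) fun h => hxD ?_)
    exact h ▸ ⟨hxR, hU hxN⟩
  have not_le {U V : Sylow q G} (hUV : U ≠ V) : ¬ (U : Subgroup G) ≤ V := fun h =>
    hUV (Sylow.ext (U.3 V.2 h).symm)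
  have hSU : S = U := eq_U (inf_lt_left.2 (not_le hST))
  have hTU : T = U := eq_U (inf_lt_right.2 (not_le hST.symm))
  exact hST (hSU.trans hTU.symm)

lemma isComplement'_zpowers_of_orderOf_eq_index {S : Sylow q G} {z : G}
    (hz : orderOf z = (S : Subgroup G).index) : (S : Subgroup G).IsComplement' (zpowers z) := by
  apply isComplement'_of_coprime <;> rw [Nat.card_zpowers, hz]
  exacts [card_mul_index _, S.card_coprime_index]

lemma exists_mem_orderOf_eq_index_of_not_isPGroup {S : Sylow q G}
    (hS : (S : Subgroup G).index.Prime) {H : Subgroup G} (hH : ¬ IsPGroup q H) :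
    ∃ z ∈ H, orderOf z = (S : Subgroup G).index := by
  have := Fact.mk hS
  have hdvd : (S : Subgroup G).index ∣ Nat.card H := by
    by_contra hndvd
    have hcard : Nat.card H ∣ Nat.card S * (S : Subgroup G).index :=
      (S : Subgroup G).card_mul_index.symm ▸ H.card_subgroup_dvd_card
    obtain ⟨k, hk⟩ := S.2.exists_card_eq
    refine hH (IsPGroup.of_card_dvd_pow (n := k) (hk ▸ ?_))
    exact (hS.coprime_iff_not_dvd.2 hndvd).symm.dvd_of_dvd_mul_right hcard
  obtain ⟨z, hz⟩ := exists_prime_orderOf_dvd_card' _ hdvd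
  exact ⟨z, z.2, by rw [orderOf_coe, hz]⟩

lemma inf_le_normalCore_of_maximal {S T : Sylow q G} (hS : (S : Subgroup G).index.Prime)
    (hST : S ≠ T)
    (hmax : ∀ U V : Sylow q G, U ≠ V → ¬ (S ⊓ T : Subgroup G) < (U ⊓ V : Subgroup G)) :
    (S ⊓ T : Subgroup G) ≤ (S : Subgroup G).normalCore := by
  obtain ⟨z, hzN, hz⟩ := exists_mem_orderOf_eq_index_of_not_isPGroup hS
    (not_isPGroup_normalizer_inf_of_maximal hST hmax)
  exact le_normalCore_of_isComplement'_of_le_normalizer inf_le_left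
    (isComplement'_zpowers_of_orderOf_eq_index hz) (zpowers_le.2 hzN)

lemma sylow_index_eq_of_card_eq {m n : ℕ} (hqm : ¬ q ∣ m) (hcard : Nat.card G = q ^ n * m)
    (S : Sylow q G) : (S : Subgroup G).index = m := by
  have hq : q.Prime := Fact.out
  have hm0 : m ≠ 0 := by
    rintro rfl
    exact hqm (dvd_zero q)
  have hS : Nat.card (S : Subgroup G) = q ^ n := by
    rw [S.card_eq_multiplicity, hcard, Nat.factorization_mul (pow_ne_zero n hq.ne_zero) hm0,
      Finsupp.add_apply, hq.factorization_pow, Finsupp.single_eq_same,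
      Nat.factorization_eq_zero_of_not_dvd hqm, add_zero]
  refine Nat.eq_of_mul_eq_mul_left (pow_pos hq.pos n) ?_
  rw [← hcard, ← (S : Subgroup G).card_mul_index, hS]

lemma relIndex_normalCore_ne_index (S : Sylow q G) (hS : (S : Subgroup G).index ≠ 1) :
    (S : Subgroup G).normalCore.relIndex S ≠ (S : Subgroup G).index := by
  obtain ⟨k, hk⟩ := S.2.index ((S : Subgroup G).normalCore.subgroupOf S)
  intro h
  refine S.not_dvd_index ?_
  rw [← h, relIndex, hk] at hS ⊢
  exact dvd_pow_self q fun hk0 => hS (by rw [hk0, pow_zero])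

lemma exists_sylow_relIndex_normalCore_lt {p : ℕ} (hp : p.Prime)
    (hindex : ∀ S : Sylow q G, (S : Subgroup G).index = p) :
    ∃ S : Sylow q G, (S : Subgroup G).normalCore.relIndex S < p := by
  by_cases hunique : Subsingleton (Sylow q G)
  · let S : Sylow q G := default
    have := S.normal_of_subsingleton
    refine ⟨S, ?_⟩
    rw [normalCore_eq_self, relIndex_self]
    exact hp.one_lt
  obtain ⟨U, V, hUV⟩ := (not_subsingleton_iff_nontrivial.1 hunique).exists_pair_ne
  obtain ⟨D, ⟨S, T, hST, rfl⟩, hmax⟩ := wellFounded_gt.has_min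
    {D : Subgroup G | ∃ S T : Sylow q G, S ≠ T ∧ (S ⊓ T : Subgroup G) = D} ⟨_, U, V, hUV, rfl⟩
  have hcore : (S ⊓ T : Subgroup G) ≤ (S : Subgroup G).normalCore :=
    inf_le_normalCore_of_maximal (hindex S ▸ hp) hST fun U V hne => hmax _ ⟨U, V, hne, rfl⟩
  have hle : (S : Subgroup G).normalCore.relIndex S ≤ p := calc
    _ ≤ (S ⊓ T : Subgroup G).relIndex S := relIndex_le_of_le_left hcore index_ne_zero_of_finite
    _ = (T : Subgroup G).relIndex S := inf_relIndex_left _ _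
    _ ≤ (T : Subgroup G).relIndex ⊤ := relIndex_le_of_le_right le_top index_ne_zero_of_finite
    _ = p := by rw [relIndex_top_right, hindex]
  refine ⟨S, hle.lt_of_ne ?_⟩
  have hne := relIndex_normalCore_ne_index S (hindex S ▸ hp.ne_one)
  rwa [hindex] at hne

theorem exists_normal_isPGroup_of_card_eq {p n : ℕ} (hp : p.Prime) (hqp : q ≠ p)
    (hcard : Nat.card G = q ^ n * p) :
    ∃ (K : Subgroup G) (_ : K.Normal) (P : Subgroup (G ⧸ K)) (_ : P.Normal),
      IsPGroup q K ∧ Nat.card P = p ∧ IsPGroup q ((G ⧸ K) ⧸ P) := by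
  have := Fact.mk hp
  have hindex := sylow_index_eq_of_card_eq
    (fun h => hqp ((Nat.prime_dvd_prime_iff_eq Fact.out hp).1 h)) hcard
  obtain ⟨S, hS⟩ := exists_sylow_relIndex_normalCore_lt hp hindex
  set K := (S : Subgroup G).normalCore
  have hGK : Nat.card (G ⧸ K) = K.relIndex S * p := by
    rw [← index_eq_card, ← relIndex_mul_index (normalCore_le (S : Subgroup G)), hindex]
  obtain ⟨P, hPnormal, hP⟩ := exists_normal_card_eq_of_card_eq_mul hS hGK
  have hGP : Nat.card ((G ⧸ K) ⧸ P) = K.relIndex S := by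
    refine Nat.eq_of_mul_eq_mul_right hp.pos ?_
    rw [← hGK, ← index_eq_card, ← P.index_mul_card, hP]
  obtain ⟨k, hk⟩ := S.2.index (K.subgroupOf S)
  exact ⟨K, inferInstance, P, hPnormal, S.2.to_le (normalCore_le _), hP,
    IsPGroup.of_card (hGP.trans hk)⟩

lemma sup_sylow_eq_top {N : Subgroup G} [N.Normal] (hN : IsPGroup q (G ⧸ N)) (Q : Sylow q G) :
    N ⊔ Q = ⊤ := by
  obtain ⟨k, hk⟩ := hN.exists_card_eq
  rw [← index_eq_one]
  refine Nat.eq_one_of_dvd_coprimes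
    (((Nat.Prime.coprime_iff_not_dvd Fact.out).2 Q.not_dvd_index).pow_left k) ?_
    (index_dvd_of_le le_sup_right)
  rw [← hk, ← index_eq_card]
  exact index_dvd_of_le le_sup_left

lemma mem_sylow_of_mem_centralizer {N : Subgroup G} [N.Normal] (hN : IsPGroup q (G ⧸ N))
    (Q : Sylow q G) {g : G} (hgN : g ∈ centralizer (N : Set G)) (hg : IsPGroup q (zpowers g)) :
    g ∈ (Q : Subgroup G) := by
  obtain ⟨R, hR⟩ := hg.exists_le_sylow
  obtain ⟨x, rfl⟩ := MulAction.exists_smul_eq G Q R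
  obtain ⟨u, hu, r, hr, rfl⟩ := mem_sup_of_normal_left.1
    (show x ∈ N ⊔ Q from sup_sylow_eq_top hN Q ▸ mem_top x)
  have hgconj : g ∈ MulAut.conj u • (Q : Subgroup G) := by
    have hrQ : r • Q = Q := Sylow.smul_eq_iff_mem_normalizer.2 (le_normalizer hr)
    rw [← Sylow.coe_subgroup_smul, ← hrQ, ← mul_smul]
    exact hR (mem_zpowers g)
  have hug : u⁻¹ * g * u = g := by rw [mul_assoc, ← hgN u hu, inv_mul_cancel_left]
  simpa [mem_pointwise_smul_iff_inv_smul_mem, ← map_inv, MulAut.smul_def, hug] using hgconj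

end Sylow

lemma exists_sylow_two_superset {P : Subgroup G} [P.Normal] (hP : (Nat.card P).Prime)
    (hGP : IsPGroup 2 (G ⧸ P)) {X : Set G} (hX : ∀ a ∈ X, a ^ 2 = 1)
    (hXX : X.Pairwise fun a b => IsPGroup 2 (zpowers (a * b))) :
    ∃ Q : Sylow 2 G, X ⊆ Q := by
  have h2 {a : G} (ha : a ∈ X) : IsPGroup 2 (zpowers a) :=
    isPGroup_zpowers_of_orderOf_dvd (k := 1) (orderOf_dvd_of_pow_eq_one (hX a ha))
  by_cases hcentral : X ⊆ centralizer (P : Set G)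
  · exact ⟨default, fun a ha => mem_sylow_of_mem_centralizer hGP _ (hcentral ha) (h2 ha)⟩
  obtain ⟨b, hb, hbP⟩ := Set.not_subset.1 hcentral
  have hbinv := (mem_centralizer_or_conj_eq_inv_of_card_prime hP (hX b hb)).resolve_left hbP
  obtain ⟨Q, hQ⟩ := (h2 hb).exists_le_sylow
  have hbQ : b ∈ (Q : Subgroup G) := hQ (mem_zpowers b)
  refine ⟨Q, fun a ha => ?_⟩
  rcases eq_or_ne a b with rfl | hab
  · exact hbQ
  rcases mem_centralizer_or_conj_eq_inv_of_card_prime hP (hX a ha) with hacent | hainv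
  · exact mem_sylow_of_mem_centralizer hGP Q hacent (h2 ha)
  · exact (mul_mem_cancel_right hbQ).1 (mem_sylow_of_mem_centralizer hGP Q
      (mul_mem_centralizer_of_conj_eq_inv hainv hbinv) (hXX ha hb hab))

theorem isPGroup_two_closure {p n : ℕ} (hp : p.Prime) (hp2 : p ≠ 2)
    (hcard : Nat.card G = 2 ^ n * p) {X : Set G} (hX : ∀ a ∈ X, a ^ 2 = 1)
    (hXX : X.Pairwise fun a b => IsPGroup 2 (zpowers (a * b))) : IsPGroup 2 (closure X) := by
  obtain ⟨K, _, P, _, hK, hP, hGP⟩ := exists_normal_isPGroup_of_card_eq hp hp2.symm hcard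
  let π := QuotientGroup.mk' K
  obtain ⟨Q, hQ⟩ : ∃ Q : Sylow 2 (G ⧸ K), π '' X ⊆ Q := by
    refine exists_sylow_two_superset (hP.symm ▸ hp) hGP ?_ ?_
    · rintro _ ⟨a, ha, rfl⟩
      rw [← map_pow, hX a ha, map_one]
    · refine Set.Pairwise.image fun a ha b hb hab => ?_
      have hmap := (hXX ha hb hab).map π
      rwa [MonoidHom.map_zpowers, map_mul] at hmap
  have hcomap : IsPGroup 2 ((Q : Subgroup (G ⧸ K)).comap π) :=
    Q.2.comap_of_ker_isPGroup π (by rwa [QuotientGroup.ker_mk'])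
  exact hcomap.to_le ((closure_le _).2 fun a ha => hQ (Set.mem_image_of_mem π ha))

theorem closure_ne_top_of_isPGroup_two_zpowers_mul {p n : ℕ} (hp : p.Prime) (hp2 : p ≠ 2)
    (hcard : Nat.card G = 2 ^ n * p) {X : Set G} (hX : ∀ a ∈ X, a ^ 2 = 1)
    (hXX : X.Pairwise fun a b => IsPGroup 2 (zpowers (a * b))) : closure X ≠ ⊤ := by
  intro htop
  have hG : IsPGroup 2 (⊤ : Subgroup G) := htop ▸ isPGroup_two_closure hp hp2 hcard hX hXX
  obtain ⟨k, hk⟩ := hG.exists_card_eq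
  rw [card_top, hcard] at hk
  exact hp2 ((Nat.prime_dvd_prime_iff_eq hp Nat.prime_two).1
    (hp.dvd_of_dvd_pow (hk ▸ dvd_mul_left p _)))

end

/-- Theorem 1.2: possible Schläfli types of regular 3-polytopes of order `2^n * p`. -/
theorem stmt_1 {G : Type*} [Group G] [Finite G] (p n : ℕ)
    (hp : p.Prime) (hodd : Odd p) (hn : 0 < n)
    (ρ0 ρ1 ρ2 : G) (hgen : Subgroup.closure {ρ0, ρ1, ρ2} = ⊤)
    (hcard : Nat.card G = 2 ^ n * p)
    (h0 : ρ0 ^ 2 = 1) (h1 : ρ1 ^ 2 = 1) (h2 : ρ2 ^ 2 = 1)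
    (h02 : (ρ0 * ρ2) ^ 2 = 1)
    (k1 k2 : ℕ) (hk1 : k1 = orderOf (ρ0 * ρ1)) (hk2 : k2 = orderOf (ρ1 * ρ2)) :
    ∃ s t : ℕ,
      (k1 = 2 ^ s * p ∧ k2 = 2 ^ t) ∨
      (k1 = 2 ^ s ∧ k2 = 2 ^ t * p) ∨
      (k1 = 2 ^ s * p ∧ k2 = 2 ^ t * p) := by
  subst hk1 hk2
  have hp2 : p ≠ 2 := hodd.ne_two_of_dvd_nat dvd_rfl
  have horder (g : G) := exists_eq_pow_or_eq_pow_mul_of_dvd hp Nat.prime_two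
    (hcard ▸ orderOf_dvd_natCard g)
  obtain ⟨s, hs⟩ := horder (ρ0 * ρ1)
  obtain ⟨t, ht⟩ := horder (ρ1 * ρ2)
  suffices ¬ (orderOf (ρ0 * ρ1) = 2 ^ s ∧ orderOf (ρ1 * ρ2) = 2 ^ t) from ⟨s, t, by tauto⟩
  rintro ⟨h01, h12⟩
  have : Std.Symm fun a b : G => IsPGroup 2 (zpowers (a * b)) :=
    ⟨fun _ _ => isPGroup_zpowers_mul_comm⟩
  have hpairs : ({ρ0, ρ1, ρ2} : Set G).Pairwise fun a b => IsPGroup 2 (zpowers (a * b)) := by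
    have hprod01 := isPGroup_zpowers_of_orderOf_dvd h01.dvd
    have hprod12 := isPGroup_zpowers_of_orderOf_dvd h12.dvd
    have hprod02 : IsPGroup 2 (zpowers (ρ0 * ρ2)) :=
      isPGroup_zpowers_of_orderOf_dvd (k := 1) (orderOf_dvd_of_pow_eq_one h02)
    simp [Set.pairwise_insert_of_symm, hprod01, hprod12, hprod02]
  exact closure_ne_top_of_isPGroup_two_zpowers_mul hp hp2 hcard (by simp [h0, h1, h2]) hpairs hgen
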